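/- Let m ≥ 1, let D be an m×m real symmetric positive semidefinite matrix, and let E be an m×m real symmetric positive definite matrix. Define φ : ℝᵐ → (−∞,+∞] by φ(x) = (xᵀEx)/(xᵀDx) if ‖x‖₂ = 1 and xᵀDx ≠ 0, and φ(x) = +∞ otherwise. Then for every x̂ with φ(x̂) < +∞ there exist d > 0, η > 0 and δ > 0 such that for every x with φ(x) < +∞, ‖x − x̂‖₂ < δ and φ(x̂) < φ(x) < φ(x̂) + η, one has ‖2Ex − 2φ(x)·Dx‖₂ / (xᵀDx) ≥ (2/d)·√(φ(x) − φ(x̂)). -/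

import Mathlib

open Filter Topology
open scoped RealInnerProductSpace

noncomputable section

/-- Matrix-vector product, as a map on Euclidean space. -/
def mvec {m : ℕ} (M : Matrix (Fin m) (Fin m) ℝ) (x : EuclideanSpace ℝ (Fin m)) :
    EuclideanSpace ℝ (Fin m) :=
  (EuclideanSpace.equiv (Fin m) ℝ).symm (M.mulVec (EuclideanSpace.equiv (Fin m) ℝ x))

/-- The quadratic form xᵀMx. -/
def qf {m : ℕ} (M : Matrix (Fin m) (Fin m) ℝ) (x : EuclideanSpace ℝ (Fin m)) : ℝ :=
  ∑ i, ∑ j, x i * M i j * x j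

open Classical in
/-- The generalized Rayleigh quotient φ(x) = xᵀEx/xᵀDx on the unit sphere. -/
def rayQuot {m : ℕ} (D E : Matrix (Fin m) (Fin m) ℝ) :
    EuclideanSpace ℝ (Fin m) → EReal :=
  fun x => if ‖x‖ = 1 ∧ qf D x ≠ 0 then ((qf E x / qf D x : ℝ) : EReal) else ⊤

/-!
Let `ρ x = ⟪x, E x⟫ / ⟪x, D x⟫` and `A = E - ρ x₀ • D`. A self-adjoint operator with closed range
is bounded below modulo its kernel, so `|⟪x, A x⟫| ≤ C * ‖A x‖ ^ 2`. Here
`⟪x, A x⟫ = (ρ x - ρ x₀) * ⟪x, D x⟫`, while `A x` differs from the residual `E x - ρ x • D x` by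
`(ρ x - ρ x₀) • D x`, whose square is of second order in `ρ x - ρ x₀` and is absorbed near `x₀` by
the first-order left-hand side. This leaves `|ρ x - ρ x₀| = O(‖E x - ρ x • D x‖ ^ 2)`.
-/

lemma exists_norm_inner_apply_le_of_isClosed_range {𝕜 V : Type*} [RCLike 𝕜] [NormedAddCommGroup V]
    [InnerProductSpace 𝕜 V] [CompleteSpace V] {A : V →L[𝕜] V} (hA : IsSelfAdjoint A)
    (hrange : IsClosed (Set.range A)) :
    ∃ C > 0, ∀ x, ‖inner 𝕜 x (A x)‖ ≤ C * ‖A x‖ ^ 2 := by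
  have : CompleteSpace A.range := hrange.completeSpace_coe
  obtain ⟨C, hC, hpreimage⟩ :=
    A.rangeRestrict.exists_preimage_norm_le A.toLinearMap.surjective_rangeRestrict
  refine ⟨C, hC, fun x => ?_⟩
  obtain ⟨y, hy, (hyC : ‖y‖ ≤ C * ‖A x‖)⟩ := hpreimage (A.rangeRestrict x)
  have hAy : A y = A x := congrArg Subtype.val hy
  have hswap : inner 𝕜 (A x) y = inner 𝕜 x (A y) := hA.isSymmetric x y
  calc ‖inner 𝕜 x (A x)‖ = ‖inner 𝕜 (A x) y‖ := by rw [hswap, hAy]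
    _ ≤ ‖A x‖ * ‖y‖ := norm_inner_le_norm _ _
    _ ≤ ‖A x‖ * (C * ‖A x‖) := by gcongr
    _ = C * ‖A x‖ ^ 2 := by ring

section Rayleigh

variable {V : Type*} [NormedAddCommGroup V] [InnerProductSpace ℝ V] {D E : V →L[ℝ] V} {x x₀ : V}

/-- The Rayleigh quotient of the operator pencil `(D, E)`, as a function on the whole space rather
than on the unit sphere; it takes the junk value `0` where `⟪x, D x⟫ = 0`. -/
def pencilRayleigh (D E : V →L[ℝ] V) (x : V) : ℝ :=
  ⟪x, E x⟫ / ⟪x, D x⟫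

lemma continuousAt_pencilRayleigh (hx : ⟪x, D x⟫ ≠ 0) : ContinuousAt (pencilRayleigh D E) x :=
  ContinuousAt.div (by fun_prop) (by fun_prop) hx

lemma inner_sub_smul_apply_eq (hx : ⟪x, D x⟫ ≠ 0) (l : ℝ) :
    ⟪x, (E - l • D) x⟫ = (pencilRayleigh D E x - l) * ⟪x, D x⟫ := by
  have hE : ⟪x, E x⟫ = pencilRayleigh D E x * ⟪x, D x⟫ := (div_mul_cancel₀ _ hx).symm
  simp only [sub_apply, smul_apply, inner_sub_right, inner_smul_right, hE, sub_mul]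

lemma norm_sub_smul_apply_sq_le (l t : ℝ) :
    ‖(E - l • D) x‖ ^ 2 ≤ 2 * (‖E x - t • D x‖ ^ 2 + (|t - l| * ‖D x‖) ^ 2) := by
  have hsplit : (E - l • D) x = (E x - t • D x) + (t - l) • D x := by
    simp only [sub_apply, smul_apply]; module
  calc ‖(E - l • D) x‖ ^ 2 ≤ (‖E x - t • D x‖ + |t - l| * ‖D x‖) ^ 2 := by
        gcongr
        rw [hsplit, ← Real.norm_eq_abs, ← norm_smul]
        exact norm_add_le _ _
    _ ≤ _ := add_sq_le

lemma abs_pencilRayleigh_sub_mul_le {C l : ℝ} (hC : 0 ≤ C)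
    (hbound : |⟪x, (E - l • D) x⟫| ≤ C * ‖(E - l • D) x‖ ^ 2) (hx : ⟪x, D x⟫ ≠ 0) :
    |pencilRayleigh D E x - l| *
        (|⟪x, D x⟫| - 2 * C * |pencilRayleigh D E x - l| * ‖D x‖ ^ 2) ≤
      2 * C * ‖E x - pencilRayleigh D E x • D x‖ ^ 2 := by
  rw [inner_sub_smul_apply_eq hx, abs_mul] at hbound
  have hsq := norm_sub_smul_apply_sq_le (D := D) (E := E) (x := x) l (pencilRayleigh D E x)
  linarith [mul_le_mul_of_nonneg_left hsq hC]

-- At `x₀` itself the inequality reads `q ^ 2 < 2 * q ^ 2` with `q = |⟪x₀, D x₀⟫|`.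
lemma eventually_inner_sq_lt (hx₀ : ⟪x₀, D x₀⟫ ≠ 0) (C : ℝ) :
    ∀ᶠ x in 𝓝 x₀, ⟪x, D x⟫ ^ 2 < 2 * |⟪x₀, D x₀⟫| *
      (|⟪x, D x⟫| - 2 * C * |pencilRayleigh D E x - pencilRayleigh D E x₀| * ‖D x‖ ^ 2) := by
  have hρ := continuousAt_pencilRayleigh (E := E) hx₀
  refine ContinuousAt.eventually_lt (by fun_prop) (by fun_prop) ?_
  have hpos : 0 < ⟪x₀, D x₀⟫ ^ 2 := by positivity
  rw [sub_self, abs_zero, mul_zero, zero_mul, sub_zero, mul_assoc, abs_mul_abs_self]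
  linarith

lemma sqrt_abs_pencilRayleigh_sub_mul_le {C l q : ℝ} (hC : 0 ≤ C) (hq : 0 ≤ q)
    (hbound : |⟪x, (E - l • D) x⟫| ≤ C * ‖(E - l • D) x‖ ^ 2) (hx : ⟪x, D x⟫ ≠ 0)
    (hle : ⟪x, D x⟫ ^ 2 ≤
      2 * q * (|⟪x, D x⟫| - 2 * C * |pencilRayleigh D E x - l| * ‖D x‖ ^ 2)) :
    √|pencilRayleigh D E x - l| * |⟪x, D x⟫| ≤
      √(4 * C * q) * ‖E x - pencilRayleigh D E x • D x‖ := by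
  set Δ := |pencilRayleigh D E x - l|
  set r := E x - pencilRayleigh D E x • D x
  have hsq : Δ * ⟪x, D x⟫ ^ 2 ≤ 4 * C * q * ‖r‖ ^ 2 :=
    calc Δ * ⟪x, D x⟫ ^ 2
        ≤ Δ * (2 * q * (|⟪x, D x⟫| - 2 * C * Δ * ‖D x‖ ^ 2)) := by gcongr
      _ = 2 * q * (Δ * (|⟪x, D x⟫| - 2 * C * Δ * ‖D x‖ ^ 2)) := by ring
      _ ≤ 2 * q * (2 * C * ‖r‖ ^ 2) :=
        mul_le_mul_of_nonneg_left (abs_pencilRayleigh_sub_mul_le hC hbound hx) (by positivity)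
      _ = 4 * C * q * ‖r‖ ^ 2 := by ring
  calc √Δ * |⟪x, D x⟫| = √(Δ * ⟪x, D x⟫ ^ 2) := by
        rw [Real.sqrt_mul (abs_nonneg _), Real.sqrt_sq_eq_abs]
    _ ≤ √(4 * C * q * ‖r‖ ^ 2) := Real.sqrt_le_sqrt hsq
    _ = √(4 * C * q) * ‖r‖ := by
        rw [Real.sqrt_mul (by positivity), Real.sqrt_sq (norm_nonneg _)]

theorem rayleigh_quotient_KL_exponent_half_general [CompleteSpace V] (hD : IsSelfAdjoint D)
    (hE : IsSelfAdjoint E) (hx₀ : ⟪x₀, D x₀⟫ ≠ 0)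
    (hrange : IsClosed (Set.range (E - pencilRayleigh D E x₀ • D))) :
    ∃ d > (0 : ℝ), ∃ δ > (0 : ℝ), ∀ x : V, ‖x - x₀‖ < δ →
      2 / d * √|pencilRayleigh D E x - pencilRayleigh D E x₀| ≤
        ‖(2 : ℝ) • E x - (2 * pencilRayleigh D E x) • D x‖ / |⟪x, D x⟫| := by
  obtain ⟨C, hC, hbound⟩ :=
    exists_norm_inner_apply_le_of_isClosed_range (hE.sub ((IsSelfAdjoint.all _).smul hD)) hrange
  have hne : ∀ᶠ x in 𝓝 x₀, ⟪x, D x⟫ ≠ 0 :=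
    ContinuousAt.eventually_ne (by fun_prop) hx₀
  obtain ⟨δ, hδ, hball⟩ :=
    Metric.eventually_nhds_iff.1 (hne.and (eventually_inner_sq_lt (E := E) hx₀ C))
  set d := √(4 * C * |⟪x₀, D x₀⟫|)
  have hd : 0 < d := by positivity
  refine ⟨d, hd, δ, hδ, fun x hxδ => ?_⟩
  obtain ⟨hx, hlt⟩ := hball (by rwa [dist_eq_norm])
  set r := E x - pencilRayleigh D E x • D x with hr
  have hsqrt : √|pencilRayleigh D E x - pencilRayleigh D E x₀| * |⟪x, D x⟫| ≤ d * ‖r‖ :=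
    sqrt_abs_pencilRayleigh_sub_mul_le hC.le (abs_nonneg _) (hbound x) hx hlt.le
  rw [mul_smul, ← smul_sub, ← hr, norm_smul, Real.norm_two, le_div_iff₀ (abs_pos.2 hx), mul_assoc]
  calc 2 / d * (√|pencilRayleigh D E x - pencilRayleigh D E x₀| * |⟪x, D x⟫|)
      ≤ 2 / d * (d * ‖r‖) := by gcongr
    _ = 2 * ‖r‖ := by field_simp

end Rayleigh

section Matrix

variable {m : ℕ} {D E : Matrix (Fin m) (Fin m) ℝ} {x : EuclideanSpace ℝ (Fin m)}

lemma mvec_eq_toEuclideanCLM (M : Matrix (Fin m) (Fin m) ℝ) (x : EuclideanSpace ℝ (Fin m)) :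
    mvec M x = Matrix.toEuclideanCLM (𝕜 := ℝ) M x := rfl

lemma qf_eq_inner (M : Matrix (Fin m) (Fin m) ℝ) (x : EuclideanSpace ℝ (Fin m)) :
    qf M x = ⟪x, Matrix.toEuclideanCLM (𝕜 := ℝ) M x⟫ := by
  simp only [qf, Matrix.inner_toEuclideanCLM, dotProduct, Matrix.mulVec, Finset.mul_sum, mul_assoc]

lemma qf_nonneg (hD : D.PosSemidef) (x : EuclideanSpace ℝ (Fin m)) : 0 ≤ qf D x := by
  rw [qf_eq_inner, Matrix.inner_toEuclideanCLM]
  exact hD.dotProduct_mulVec_nonneg x.ofLp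

lemma rayQuot_ne_top_iff : rayQuot D E x ≠ ⊤ ↔ ‖x‖ = 1 ∧ qf D x ≠ 0 := by
  simp [rayQuot]

lemma toReal_rayQuot (hx : rayQuot D E x ≠ ⊤) :
    (rayQuot D E x).toReal =
      pencilRayleigh (Matrix.toEuclideanCLM (𝕜 := ℝ) D) (Matrix.toEuclideanCLM (𝕜 := ℝ) E) x := by
  rw [rayQuot, if_pos (rayQuot_ne_top_iff.1 hx), EReal.toReal_coe, qf_eq_inner, qf_eq_inner,
    pencilRayleigh]

end Matrix

/-- Proposition 6.4: the generalized Rayleigh quotient satisfies the KL property with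
exponent 1/2 at every point of its domain. -/
theorem rayleigh_quotient_KL_exponent_half
    {m : ℕ} (hm : 1 ≤ m)
    (D E : Matrix (Fin m) (Fin m) ℝ) (hD : D.PosSemidef) (hE : E.PosDef)
    (xh : EuclideanSpace ℝ (Fin m)) (hxh : rayQuot D E xh ≠ ⊤) :
    ∃ d > (0 : ℝ), ∃ η > (0 : ℝ), ∃ δ > (0 : ℝ),
      ∀ x : EuclideanSpace ℝ (Fin m), rayQuot D E x ≠ ⊤ → ‖x - xh‖ < δ →
        rayQuot D E xh < rayQuot D E x →
        rayQuot D E x < rayQuot D E xh + ((η : ℝ) : EReal) →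
        2 / d * Real.sqrt ((rayQuot D E x).toReal - (rayQuot D E xh).toReal) ≤
          ‖(2 : ℝ) • mvec E x - (2 * (rayQuot D E x).toReal) • mvec D x‖ / qf D x := by
  have hxh_ne : qf D xh ≠ 0 := (rayQuot_ne_top_iff.1 hxh).2
  rw [qf_eq_inner] at hxh_ne
  obtain ⟨d, hd, δ, hδ, hKL⟩ := rayleigh_quotient_KL_exponent_half_general
    (hD.isHermitian.isSelfAdjoint.map (Matrix.toEuclideanCLM (𝕜 := ℝ)))
    (hE.isHermitian.isSelfAdjoint.map (Matrix.toEuclideanCLM (𝕜 := ℝ))) hxh_ne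
    (LinearMap.range _).closed_of_finiteDimensional
  refine ⟨d, hd, 1, one_pos, δ, hδ, fun x hx hxδ _ _ => ?_⟩
  specialize hKL x hxδ
  rw [← toReal_rayQuot hx, ← toReal_rayQuot hxh, ← qf_eq_inner, abs_of_nonneg (qf_nonneg hD x)]
    at hKL
  rw [mvec_eq_toEuclideanCLM, mvec_eq_toEuclideanCLM]
  refine le_trans ?_ hKL
  gcongr
  exact le_abs_self _
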